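/- arXiv:2409.13680 — 2 statements merged into one kernel-verified Lean document; each statement's English description precedes it below -/
import Mathlib

section
/- Let G be a finite simple graph with n vertices and e edges, minimum degree δ ≥ 1, and independence number β. Then F(G) ≥ (n − β)·δ³ + δ·(2β²δ² − e²)/β, with equality if and only if G is a regular balanced bipartite graph. -/
open Finset

/-- The first Zagreb index of a graph: the sum of the squares of the vertex degrees. -/
def zagreb1 {V : Type*} [Fintype V] (G : SimpleGraph V) [DecidableRel G.Adj] : ℝ :=
  ∑ u, (G.degree u : ℝ) ^ 2

/-- The forgotten topological index of a graph: the sum of the cubes of the vertex degrees. -/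
def forgottenIndex {V : Type*} [Fintype V] (G : SimpleGraph V) [DecidableRel G.Adj] : ℝ :=
  ∑ u, (G.degree u : ℝ) ^ 3

/-- The inverse degree of a graph: the sum of the reciprocals of the vertex degrees. -/
noncomputable def invDegree {V : Type*} [Fintype V] (G : SimpleGraph V) [DecidableRel G.Adj] : ℝ :=
  ∑ u, 1 / (G.degree u : ℝ)

/-- The independence number of a graph: the largest cardinality of a set of pairwise
nonadjacent vertices. -/
noncomputable def indepNum {V : Type*} [Fintype V] (G : SimpleGraph V) : ℕ :=
  sSup {k | ∃ s : Finset V, s.card = k ∧ ∀ u ∈ s, ∀ v ∈ s, ¬ G.Adj u v}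

/-- A graph is a regular balanced bipartite graph if its vertices can be partitioned into
two parts of equal size with every edge joining the two parts, and all vertices have the
same degree. -/
def IsRegularBalancedBipartite {V : Type*} [Fintype V] (G : SimpleGraph V) [DecidableRel G.Adj] : Prop :=
  ∃ (A : Finset V) (r : ℕ), 2 * A.card = Fintype.card V ∧
    (∀ u v, G.Adj u v → (u ∈ A ↔ v ∉ A)) ∧ G.IsRegularOfDegree r

/-- A graph is `k`-connected if it has more than `k` vertices and removing any set of
fewer than `k` vertices leaves a connected graph. -/
def IsKConnected {V : Type*} [Fintype V] (G : SimpleGraph V) (k : ℕ) : Prop :=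
  k < Fintype.card V ∧
    ∀ S : Finset V, S.card < k → (G.induce (↑S : Set V)ᶜ).Connected

/-- A graph is traceable if it has a Hamiltonian path. -/
def IsTraceable {V : Type*} [DecidableEq V] (G : SimpleGraph V) : Prop :=
  ∃ (u v : V) (p : G.Walk u v), p.IsHamiltonian

/-- Twice the edge count, split along an independent set: the edges meeting `s` are counted by the
degrees in `s`, the others by the neighbours outside `s` of the vertices outside `s`. -/
theorem two_mul_card_edgeFinset_of_independent {V : Type*} [Fintype V] [DecidableEq V]
    (G : SimpleGraph V) [DecidableRel G.Adj] {s : Finset V}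
    (hs : ∀ u ∈ s, ∀ v ∈ s, ¬ G.Adj u v) :
    2 * G.edgeFinset.card
      = 2 * ∑ u ∈ s, G.degree u + ∑ v ∈ sᶜ, (G.neighborFinset v ∩ sᶜ).card := by
  have inside : ∑ u ∈ s, G.degree u = ∑ v ∈ sᶜ, (G.neighborFinset v ∩ s).card := by
    calc ∑ u ∈ s, G.degree u = ∑ u ∈ s, (sᶜ.bipartiteAbove G.Adj u).card := by
          refine sum_congr rfl fun u hu => ?_
          rw [← G.card_neighborFinset_eq_degree]
          congr 1
          ext v
          simp only [SimpleGraph.mem_neighborFinset, mem_bipartiteAbove, mem_compl]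
          exact ⟨fun h => ⟨fun hv => hs u hu v hv h, h⟩, fun h => h.2⟩
      _ = ∑ v ∈ sᶜ, (s.bipartiteBelow G.Adj v).card :=
          sum_card_bipartiteAbove_eq_sum_card_bipartiteBelow _
      _ = _ := by
          refine sum_congr rfl fun v _ => ?_
          congr 1
          ext u
          simp [mem_bipartiteBelow, G.adj_comm, and_comm]
  have outside : ∑ v ∈ sᶜ, G.degree v
      = ∑ v ∈ sᶜ, (G.neighborFinset v ∩ s).card
        + ∑ v ∈ sᶜ, (G.neighborFinset v ∩ sᶜ).card := by
    rw [← sum_add_distrib]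
    refine sum_congr rfl fun v _ => ?_
    rw [← G.card_neighborFinset_eq_degree, ← sdiff_eq_inter_compl, card_inter_add_card_sdiff]
  rw [← G.sum_degrees_eq_twice_card_edges, ← sum_add_sum_compl s, outside, ← inside]
  ring

theorem card_mul_minDegree_le_card_edgeFinset {V : Type*} [Fintype V] [DecidableEq V]
    (G : SimpleGraph V) [DecidableRel G.Adj] {s : Finset V}
    (hs : ∀ u ∈ s, ∀ v ∈ s, ¬ G.Adj u v) :
    s.card * G.minDegree ≤ G.edgeFinset.card := by
  have hsum : s.card * G.minDegree ≤ ∑ u ∈ s, G.degree u := by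
    rw [← smul_eq_mul]
    exact card_nsmul_le_sum s _ _ fun u _ => G.minDegree_le_degree u
  have := two_mul_card_edgeFinset_of_independent G hs
  omega

theorem bddAbove_card_independent {V : Type*} [Fintype V] (G : SimpleGraph V) :
    BddAbove {k | ∃ s : Finset V, s.card = k ∧ ∀ u ∈ s, ∀ v ∈ s, ¬ G.Adj u v} :=
  ⟨Fintype.card V, by rintro k ⟨s, rfl, -⟩; exact s.card_le_univ⟩

theorem card_le_indepNum {V : Type*} [Fintype V] (G : SimpleGraph V) {s : Finset V}
    (hs : ∀ u ∈ s, ∀ v ∈ s, ¬ G.Adj u v) : s.card ≤ indepNum G :=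
  le_csSup (bddAbove_card_independent G) ⟨s, rfl, hs⟩

theorem exists_card_eq_indepNum {V : Type*} [Fintype V] (G : SimpleGraph V) :
    ∃ s : Finset V, s.card = indepNum G ∧ ∀ u ∈ s, ∀ v ∈ s, ¬ G.Adj u v :=
  Nat.sSup_mem (s := {k | ∃ s : Finset V, s.card = k ∧ ∀ u ∈ s, ∀ v ∈ s, ¬ G.Adj u v})
    ⟨0, ∅, by simp⟩ (bddAbove_card_independent G)

theorem isRegularBalancedBipartite_iff {V : Type*} [Fintype V] [DecidableEq V]
    (G : SimpleGraph V) [DecidableRel G.Adj] (hδ : 1 ≤ G.minDegree) :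
    IsRegularBalancedBipartite G ↔ G.IsRegularOfDegree G.minDegree ∧
      G.edgeFinset.card = indepNum G * G.minDegree := by
  have edges_of_regular : ∀ r, G.IsRegularOfDegree r →
      Fintype.card V * r = 2 * G.edgeFinset.card := fun r hr => by
    simp [← G.sum_degrees_eq_twice_card_edges, hr.degree_eq]
  obtain ⟨s, hcard, hs⟩ := exists_card_eq_indepNum G
  constructor
  · rintro ⟨A, r, hA, hbip, hr⟩
    have : Nonempty V := by
      by_contra h
      rw [not_nonempty_iff] at h
      simp at hδ
    obtain ⟨v, hv⟩ := G.exists_minimal_degree_vertex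
    have hreg : G.IsRegularOfDegree G.minDegree := by rwa [hv, hr.degree_eq v]
    refine ⟨hreg, le_antisymm ?_ (hcard ▸ card_mul_minDegree_le_card_edgeFinset G hs)⟩
    have hle : A.card ≤ indepNum G :=
      card_le_indepNum G fun u hu v hv h => (hbip u v h).1 hu hv
    have := edges_of_regular _ hreg
    nlinarith [Nat.mul_le_mul_right G.minDegree hle]
  · rintro ⟨hreg, he⟩
    have hsum : ∑ u ∈ s, G.degree u = G.edgeFinset.card := by
      simp [hreg.degree_eq, he, hcard]
    have hzero : ∑ v ∈ sᶜ, (G.neighborFinset v ∩ sᶜ).card = 0 := by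
      have := two_mul_card_edgeFinset_of_independent G hs
      omega
    refine ⟨s, G.minDegree, ?_, fun u v h => ⟨fun hu hv => hs u hu v hv h, fun hv => ?_⟩, hreg⟩
    · have := edges_of_regular _ hreg
      refine Nat.eq_of_mul_eq_mul_right hδ ?_
      rw [this, he, hcard, mul_assoc]
    · by_contra hu
      have hempty := card_eq_zero.1 (sum_eq_zero_iff.1 hzero u (mem_compl.2 hu))
      have : v ∈ G.neighborFinset u ∩ sᶜ := by simp [h, hv]
      simp [hempty] at this

theorem card_mul_minDegree_pow_le_forgottenIndex {V : Type*} [Fintype V]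
    (G : SimpleGraph V) [DecidableRel G.Adj] :
    (Fintype.card V : ℝ) * (G.minDegree : ℝ) ^ 3 ≤ forgottenIndex G := by
  have := Finset.univ.card_nsmul_le_sum (fun u => (G.degree u : ℝ) ^ 3)
    ((G.minDegree : ℝ) ^ 3) fun u _ => by
      have := G.minDegree_le_degree u
      gcongr
  simpa [forgottenIndex] using this

theorem forgottenIndex_eq_iff_isRegularOfDegree {V : Type*} [Fintype V]
    (G : SimpleGraph V) [DecidableRel G.Adj] :
    forgottenIndex G = (Fintype.card V : ℝ) * (G.minDegree : ℝ) ^ 3 ↔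
      G.IsRegularOfDegree G.minDegree := by
  have hle : ∀ u ∈ univ, (G.minDegree : ℝ) ^ 3 ≤ (G.degree u : ℝ) ^ 3 := fun u _ => by
    have := G.minDegree_le_degree u
    gcongr
  have hconst : (Fintype.card V : ℝ) * (G.minDegree : ℝ) ^ 3
      = ∑ _u : V, (G.minDegree : ℝ) ^ 3 := by simp
  rw [hconst, eq_comm, forgottenIndex, sum_eq_sum_iff_of_le hle]
  refine ⟨fun h u => ?_, fun h u _ => by rw [h.degree_eq u]⟩
  have := h u (mem_univ u)
  norm_cast at this
  exact (Nat.pow_left_injective (by norm_num : 3 ≠ 0) this).symm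

/-- For a graph `G` with `n` vertices, `e` edges, minimum degree `δ ≥ 1`, and independence
number `β`: `F(G) ≥ (n − β)δ³ + δ(2β²δ² − e²)/β`, with equality iff `G` is a regular
balanced bipartite graph. -/
theorem stmt2 {V : Type*} [Fintype V] [DecidableEq V] (G : SimpleGraph V) [DecidableRel G.Adj]
    (hδ : 1 ≤ G.minDegree) :
    forgottenIndex G ≥ ((Fintype.card V : ℝ) - indepNum G) * (G.minDegree : ℝ) ^ 3
        + (G.minDegree : ℝ) * (2 * (indepNum G : ℝ) ^ 2 * (G.minDegree : ℝ) ^ 2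
            - (G.edgeFinset.card : ℝ) ^ 2) / indepNum G ∧
    (forgottenIndex G = ((Fintype.card V : ℝ) - indepNum G) * (G.minDegree : ℝ) ^ 3
        + (G.minDegree : ℝ) * (2 * (indepNum G : ℝ) ^ 2 * (G.minDegree : ℝ) ^ 2
            - (G.edgeFinset.card : ℝ) ^ 2) / indepNum G
      ↔ IsRegularBalancedBipartite G) := by
  have hn := card_mul_minDegree_pow_le_forgottenIndex G
  obtain ⟨s, hcard, hs⟩ := exists_card_eq_indepNum G
  have hβ : 0 < indepNum G := by
    have : Nonempty V := by
      by_contra h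
      rw [not_nonempty_iff] at h
      simp at hδ
    obtain ⟨v⟩ := this
    exact (card_le_indepNum G (s := {v}) (by simp)).trans_lt' (by simp)
  have he : indepNum G * G.minDegree ≤ G.edgeFinset.card :=
    hcard ▸ card_mul_minDegree_le_card_edgeFinset G hs
  rw [isRegularBalancedBipartite_iff G hδ, ← forgottenIndex_eq_iff_isRegularOfDegree]
  have heq : (G.edgeFinset.card = indepNum G * G.minDegree) ↔
      (G.edgeFinset.card : ℝ) = indepNum G * G.minDegree := by norm_cast
  rw [heq]
  have he' : (indepNum G : ℝ) * G.minDegree ≤ G.edgeFinset.card := by exact_mod_cast he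
  have hβ' : (0 : ℝ) < indepNum G := by exact_mod_cast hβ
  have hδ' : (0 : ℝ) < G.minDegree := by exact_mod_cast hδ
  generalize (G.edgeFinset.card : ℝ) = e at *
  generalize (indepNum G : ℝ) = b at *
  generalize (G.minDegree : ℝ) = d at *
  generalize (Fintype.card V : ℝ) = n at *
  have hrhs : (n - b) * d ^ 3 + d * (2 * b ^ 2 * d ^ 2 - e ^ 2) / b
      = n * d ^ 3 - d / b * (e + b * d) * (e - b * d) := by
    field_simp
    ring
  have hbd : 0 < b * d := mul_pos hβ' hδ'
  have hcoef : 0 < d / b * (e + b * d) := mul_pos (div_pos hδ' hβ') (by linarith)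
  have hgap : 0 ≤ d / b * (e + b * d) * (e - b * d) := mul_nonneg hcoef.le (sub_nonneg.2 he')
  rw [hrhs]
  refine ⟨by linarith, fun h => ⟨by linarith, ?_⟩, fun ⟨hF, hE⟩ => by simp [hF, hE]⟩
  have hzero : d / b * (e + b * d) * (e - b * d) = 0 := by linarith
  exact sub_eq_zero.1 ((mul_eq_zero.1 hzero).resolve_left hcoef.ne')
end

section
/- Let G be a k-connected (k ≥ 2) finite simple graph with n ≥ 3 vertices, e edges, and minimum degree δ. If F(G) ≤ (n − k − 1)·δ³ + δ·(2(k + 1)²δ² − e²)/(k + 1), then G is Hamiltonian. -/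
open Finset

/-- A nodup list whose consecutive entries are adjacent, as are its last and first entries.
An edge counts as a cyclic list of length two. -/
structure IsCyclicList {V : Type*} (G : SimpleGraph V) (l : List V) : Prop where
  nodup : l.Nodup
  isChain : l.IsChain G.Adj
  adj_ends : ∀ x ∈ l.getLast?, ∀ y ∈ l.head?, G.Adj x y

namespace IsCyclicList

variable {V : Type*} {G : SimpleGraph V} {l l' : List V}

lemma append_comm {a b : List V} (h : IsCyclicList G (a ++ b)) : IsCyclicList G (b ++ a) := by
  rcases eq_or_ne a [] with rfl | ha
  · simpa using h
  rcases eq_or_ne b [] with rfl | hb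
  · simpa using h
  obtain ⟨h1, h2, h3⟩ := h
  rw [List.isChain_append] at h2
  refine ⟨List.nodup_append_comm.1 h1, List.isChain_append.2 ⟨h2.2.1, h2.1, ?_⟩, ?_⟩
  · intro x hx y hy
    exact h3 x (by rw [List.getLast?_append_of_ne_nil _ hb]; exact hx) y
      (by rw [List.head?_append_of_ne_nil _ ha]; exact hy)
  · rw [List.getLast?_append_of_ne_nil _ ha, List.head?_append_of_ne_nil _ hb]
    exact h2.2.2

lemma of_isRotated (h : IsCyclicList G l) (hr : l ~r l') : IsCyclicList G l' := by
  obtain ⟨n, hn, rfl⟩ := List.isRotated_iff_mod.1 hr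
  rw [List.rotate_eq_drop_append_take hn]
  apply append_comm
  rwa [List.take_append_drop]

lemma isHamiltonian [Fintype V] [DecidableEq V] (h : IsCyclicList G l)
    (hl : l.length = Fintype.card V) (h3 : 3 ≤ l.length) : G.IsHamiltonian := by
  intro _
  have hne : l ≠ [] := by rintro rfl; simp at h3
  have hadj : G.Adj (l.getLast hne) (l.head hne) :=
    h.adj_ends _ (by simp [List.getLast?_eq_getLast_of_ne_nil hne]) _
      (by simp [List.head?_eq_some_head hne])
  refine ⟨_, .cons hadj (.ofSupport l hne h.isChain), ?_⟩
  rw [SimpleGraph.Walk.isHamiltonianCycle_iff_isCycle_and_length_eq]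
  constructor
  · rw [SimpleGraph.Walk.isCycle_iff_isPath_tail_and_le_length]
    simp [SimpleGraph.Walk.isPath_def, h.nodup]
    omega
  · simp; omega

/-- Rotating a cyclic list so that a given vertex comes last puts its successor first. -/
lemma exists_isRotated_getLast [DecidableEq V] {x : V} (hn : l.Nodup) (hx : x ∈ l) :
    ∃ l', l ~r l' ∧ l'.getLast? = some x ∧ l'.head? = some (l.next x hx) := by
  obtain ⟨a, b, rfl⟩ := List.append_of_mem hx
  have hr : (a ++ x :: b) ~r (b ++ (a ++ [x])) := by
    simpa using List.isRotated_append (l := a ++ [x]) (l' := b)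
  refine ⟨_, hr, by simp, ?_⟩
  have h0 : b ++ (a ++ [x]) ≠ [] := by simp
  have := List.next_getLast_eq_head _ h0 (hr.nodup_iff.1 hn)
  rw [List.head?_eq_some_head h0, ← this, List.isRotated_next_eq hr hn]
  simp

lemma next_eq_of_isRotated [DecidableEq V] {x y : V} (hn : l.Nodup) (hx : x ∈ l)
    (hr : l ~r l') (h1 : l'.getLast? = some x) (h2 : l'.head? = some y) : l.next x hx = y := by
  have h0 : l' ≠ [] := by rintro rfl; simp at h1
  rw [List.getLast?_eq_getLast_of_ne_nil h0, Option.some_inj] at h1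
  rw [List.head?_eq_some_head h0, Option.some_inj] at h2
  subst h1 h2
  rw [List.isRotated_next_eq hr hn, List.next_getLast_eq_head _ h0 (hr.nodup_iff.1 hn)]

/-- Closing up a cyclic list through a path disjoint from it. -/
lemma append (h : IsCyclicList G l) {p : List V} (hp : p.Nodup) (hpc : p.IsChain G.Adj)
    (hd : l.Disjoint p) (hp0 : p ≠ []) (hl0 : l ≠ [])
    (h1 : ∀ x ∈ l.getLast?, ∀ y ∈ p.head?, G.Adj x y)
    (h2 : ∀ x ∈ p.getLast?, ∀ y ∈ l.head?, G.Adj x y) : IsCyclicList G (l ++ p) := by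
  refine ⟨h.nodup.append hp hd, List.isChain_append.2 ⟨h.isChain, hpc, h1⟩, ?_⟩
  rwa [List.getLast?_append_of_ne_nil _ hp0, List.head?_append_of_ne_nil _ hl0]

/-- Exchanging two arcs of a cyclic list along a chord and a path disjoint from the list. -/
lemma append_append_reverse {a b p : List V} (h : IsCyclicList G (a ++ b)) (hp : p.Nodup)
    (hpc : p.IsChain G.Adj) (hd : (a ++ b).Disjoint p) (hp0 : p ≠ []) (ha0 : a ≠ [])
    (hb0 : b ≠ [])
    (h1 : ∀ x ∈ a.getLast?, ∀ y ∈ p.head?, G.Adj x y)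
    (h2 : ∀ x ∈ p.getLast?, ∀ y ∈ b.getLast?, G.Adj x y)
    (h3 : ∀ x ∈ b.head?, ∀ y ∈ a.head?, G.Adj x y) : IsCyclicList G (a ++ (p ++ b.reverse)) := by
  have hc := List.isChain_append.1 h.isChain
  refine ⟨?_, ?_, ?_⟩
  · have : (a ++ (p ++ b.reverse)).Perm ((a ++ b) ++ p) := by
      rw [List.append_assoc]
      exact ((List.perm_append_comm).trans ((List.reverse_perm b).append_right p)).append_left a
    exact this.nodup_iff.2 (h.nodup.append hp hd)
  · refine List.isChain_append.2 ⟨hc.1, List.isChain_append.2 ⟨hpc, ?_, ?_⟩, ?_⟩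
    · rw [List.isChain_reverse]
      simpa [SimpleGraph.adj_comm] using hc.2.1
    · simpa using h2
    · rwa [List.head?_append_of_ne_nil _ hp0]
  · rw [List.head?_append_of_ne_nil _ ha0, List.getLast?_append_of_ne_nil _ (by simp [hb0]),
      List.getLast?_append_of_ne_nil _ (by simpa using hb0)]
    simpa using h3

end IsCyclicList

/-- The vertex `x` has a neighbour that is reachable from `h` by a walk avoiding `l`. -/
def IsAttached {V : Type*} (G : SimpleGraph V) (l : List V) (h x : V) : Prop :=
  ∃ (u : V) (p : G.Walk h u), (∀ z ∈ p.support, z ∉ l) ∧ G.Adj x u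

section ChvatalErdos

variable {V : Type*} {G : SimpleGraph V} {l : List V} {h x y : V}

lemma IsAttached.exists_path [DecidableEq V] (hx : IsAttached G l h x) (hy : IsAttached G l h y) :
    ∃ p : List V, p.Nodup ∧ p.IsChain G.Adj ∧ l.Disjoint p ∧ p ≠ [] ∧
      (∀ z ∈ p.head?, G.Adj x z) ∧ (∀ z ∈ p.getLast?, G.Adj z y) := by
  obtain ⟨u, p, hp, hxu⟩ := hx
  obtain ⟨v, q, hq, hyv⟩ := hy
  refine ⟨(p.reverse.append q).bypass.support, (SimpleGraph.Walk.bypass_isPath _).support_nodup,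
    SimpleGraph.Walk.isChain_adj_support _, ?_, SimpleGraph.Walk.support_ne_nil _, ?_, ?_⟩
  · intro z hzl hz
    have := SimpleGraph.Walk.support_bypass_subset_support _ hz
    rw [SimpleGraph.Walk.mem_support_append_iff, SimpleGraph.Walk.support_reverse,
      List.mem_reverse] at this
    exact this.elim (hp z · hzl) (hq z · hzl)
  · rw [List.head?_eq_some_head (SimpleGraph.Walk.support_ne_nil _)]
    simpa using hxu
  · rw [List.getLast?_eq_getLast_of_ne_nil (SimpleGraph.Walk.support_ne_nil _)]
    simpa using hyv.symm

lemma IsKConnected.le_degree [Fintype V] [DecidableEq V] [DecidableRel G.Adj] {k : ℕ}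
    (hG : IsKConnected G k) (v : V) : k ≤ G.degree v := by
  by_contra! hlt
  have hconn := hG.2 (G.neighborFinset v) hlt
  have hcard : (insert v (G.neighborFinset v)).card < Fintype.card V := by
    have := Finset.card_insert_le v (G.neighborFinset v)
    rw [G.card_neighborFinset_eq_degree] at this
    have := hG.1
    omega
  obtain ⟨w, hw⟩ := Finset.exists_mem_notMem_of_card_lt_card (s := insert v (G.neighborFinset v))
    (t := univ) (by simpa using hcard)
  simp only [mem_univ, mem_insert, not_or, true_and] at hw
  have hr := hconn.preconnected ⟨v, by simp⟩ ⟨w, by simpa using hw.2⟩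
  rw [SimpleGraph.reachable_iff_reflTransGen] at hr
  rcases hr.cases_head with heq | ⟨c, hc, -⟩
  · exact hw.1 (by simpa using heq.symm)
  · exact c.2 (by simpa using hc)

lemma le_card_isAttached [Fintype V] [DecidableEq V] {k : ℕ} (hG : IsKConnected G k)
    (hh : h ∉ l) (T : Finset V) (hT : ∀ x, x ∈ T ↔ x ∈ l ∧ IsAttached G l h x)
    (hy : y ∈ l) (hyT : y ∉ T) : k ≤ T.card := by
  by_contra! hlt
  have hhT : h ∉ T := fun hm => hh ((hT h).1 hm).1
  have hr := (hG.2 T hlt).preconnected ⟨h, by simpa using hhT⟩ ⟨y, by simpa using hyT⟩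
  rw [SimpleGraph.reachable_iff_reflTransGen] at hr
  have key : ∀ c : ((↑T : Set V)ᶜ : Set V),
      Relation.ReflTransGen (G.induce (↑T : Set V)ᶜ).Adj ⟨h, by simpa using hhT⟩ c →
      ∃ p : G.Walk h c, ∀ z ∈ p.support, z ∉ l := by
    intro c hc
    induction hc with
    | refl => exact ⟨.nil, by simpa using hh⟩
    | @tail b c _ hbc ih =>
      obtain ⟨p, hp⟩ := ih
      have hbc' : G.Adj b c := hbc
      refine ⟨p.concat hbc', fun z hz => ?_⟩
      rw [SimpleGraph.Walk.support_concat, List.mem_append,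
        List.mem_singleton] at hz
      rcases hz with hz | rfl
      · exact hp z hz
      · intro hcl
        exact c.2 (by simpa using (hT c).2 ⟨hcl, _, p, hp, hbc'.symm⟩)
  obtain ⟨p, hp⟩ := key _ hr
  exact hp y p.end_mem_support hy

lemma IsCyclicList.not_isAttached_next [DecidableEq V] (hl : IsCyclicList G l)
    (hmax : ∀ l', IsCyclicList G l' → l'.length ≤ l.length) (hx : x ∈ l)
    (hax : IsAttached G l h x) : ¬ IsAttached G l h (l.next x hx) := by
  intro hay
  obtain ⟨l', hr, hlast, hhead⟩ := IsCyclicList.exists_isRotated_getLast hl.nodup hx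
  obtain ⟨p, hpn, hpc, hpd, hp0, hp1, hp2⟩ := hax.exists_path hay
  have hl0 : l' ≠ [] := by rintro rfl; simp at hlast
  have := hmax _ ((hl.of_isRotated hr).append hpn hpc
    (fun z hz => hpd (hr.mem_iff.2 hz)) hp0 hl0
    (by rw [hlast]; simpa using hp1) (by rw [hhead]; simpa using hp2))
  rw [List.length_append, hr.perm.length_eq] at this
  have := List.length_pos_iff.2 hp0
  omega

lemma IsCyclicList.not_adj_next_next [DecidableEq V] (hl : IsCyclicList G l)
    (hmax : ∀ l', IsCyclicList G l' → l'.length ≤ l.length) (hx : x ∈ l) (hy : y ∈ l)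
    (hax : IsAttached G l h x) (hay : IsAttached G l h y) :
    ¬ G.Adj (l.next x hx) (l.next y hy) := by
  intro hadj
  have hxy : x ≠ y := by rintro rfl; exact G.loopless.irrefl _ hadj
  obtain ⟨l', hr, hlast, hhead⟩ := IsCyclicList.exists_isRotated_getLast hl.nodup hx
  obtain ⟨a, b, rfl⟩ := List.append_of_mem (hr.mem_iff.1 hy)
  have hb0 : b ≠ [] := by rintro rfl; simp at hlast; exact hxy hlast.symm
  have hr2 : l ~r (b ++ (a ++ [y])) := hr.trans (by
    simpa using List.isRotated_append (l := a ++ [y]) (l' := b))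
  have hbh : b.head? = some (l.next y hy) := by
    have := IsCyclicList.next_eq_of_isRotated (y := b.head hb0) hl.nodup hy hr2 (by simp)
      (by rw [List.head?_append_of_ne_nil _ hb0, List.head?_eq_some_head hb0])
    rw [this, List.head?_eq_some_head hb0]
  obtain ⟨p, hpn, hpc, hpd, hp0, hp1, hp2⟩ := hay.exists_path hax
  have hcyc : IsCyclicList G ((a ++ [y]) ++ b) := by simpa using hl.of_isRotated hr
  have hbl : b.getLast? = some x := by
    rwa [List.getLast?_append_of_ne_nil _ (by simp), List.getLast?_cons_of_ne_nil hb0] at hlast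
  have hah : (a ++ [y]).head? = some (l.next x hx) := by
    rw [← hhead]; cases a <;> simp
  have := hmax _ (hcyc.append_append_reverse hpn hpc
    (fun z hz => hpd (hr.mem_iff.2 (by simpa using hz))) hp0 (by simp) hb0
    (by simpa using hp1) (by rw [hbl]; simpa using hp2)
    (by rw [hbh, hah]; simpa using hadj.symm))
  have hlen := hr.perm.length_eq
  simp only [List.length_append, List.length_reverse, List.length_cons, List.length_nil]
    at this hlen
  have := List.length_pos_iff.2 hp0
  omega

/-- **Chvátal–Erdős**: a `k`-connected graph on at least three vertices without a Hamiltonian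
cycle has an independent set of size `k + 1`. -/
theorem IsKConnected.exists_indep_of_not_isHamiltonian [Fintype V] [DecidableEq V] {k : ℕ}
    (hG : IsKConnected G k) (hk : 1 ≤ k) (hn : 3 ≤ Fintype.card V) (hham : ¬ G.IsHamiltonian) :
    ∃ s : Finset V, s.card = k + 1 ∧ ∀ u ∈ s, ∀ v ∈ s, ¬ G.Adj u v := by
  classical
  have hbound : ∀ l, IsCyclicList G l → l.length ≤ Fintype.card V :=
    fun l hl => hl.nodup.length_le_card
  obtain ⟨l, hl, hlpos, hmax⟩ : ∃ l, IsCyclicList G l ∧ l ≠ [] ∧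
      ∀ l', IsCyclicList G l' → l'.length ≤ l.length := by
    obtain ⟨v⟩ : Nonempty V := Fintype.card_pos_iff.1 (by omega)
    obtain ⟨w, hw⟩ := (G.degree_pos_iff_exists_adj v).1 (hk.trans (hG.le_degree v))
    have h2 : IsCyclicList G [v, w] :=
      ⟨by simpa using hw.ne, by simpa using hw, by simpa using hw.symm⟩
    have hex : ∃ m, ∃ l, IsCyclicList G l ∧ Fintype.card V - l.length = m := ⟨_, _, h2, rfl⟩
    obtain ⟨l, hl, hlm⟩ := Nat.find_spec hex
    have hmax : ∀ l', IsCyclicList G l' → l'.length ≤ l.length := by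
      intro l' hl'
      have := Nat.find_min' hex ⟨l', hl', rfl⟩
      have := hbound l hl
      have := hbound l' hl'
      omega
    refine ⟨l, hl, ?_, hmax⟩
    rintro rfl
    simpa using hmax _ h2
  obtain ⟨h, hh⟩ : ∃ h, h ∉ l := by
    by_contra! hall
    have hlen : l.length = Fintype.card V := by
      rw [← List.toFinset_card_of_nodup hl.nodup, ← Finset.card_univ]
      congr 1
      ext v
      simpa using hall v
    exact hham (hl.isHamiltonian hlen (hlen ▸ hn))
  set T : Finset V := l.toFinset.filter (IsAttached G l h) with hTdef
  have hT : ∀ x, x ∈ T ↔ x ∈ l ∧ IsAttached G l h x := by simp [hTdef]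
  have hTk : k ≤ T.card := by
    obtain ⟨c, hc⟩ := List.exists_mem_of_ne_nil l hlpos
    by_cases hac : IsAttached G l h c
    · exact le_card_isAttached hG hh T hT (List.next_mem _ _ hc)
        fun hm => hl.not_isAttached_next hmax hc hac ((hT _).1 hm).2
    · exact le_card_isAttached hG hh T hT hc fun hm => hac ((hT _).1 hm).2
  set S : Finset V := T.attach.image fun x : T => l.next x ((hT x).1 x.2).1 with hS
  have hScard : S.card = T.card := by
    rw [hS, Finset.card_image_of_injective, Finset.card_attach]
    intro x y hxy
    apply Subtype.ext
    simp only at hxy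
    rw [← List.prev_next l hl.nodup x ((hT x).1 x.2).1,
      ← List.prev_next l hl.nodup y ((hT y).1 y.2).1]
    simp only [hxy]
  have hSmem : ∀ u ∈ S, ∃ x, ∃ hx : x ∈ l, IsAttached G l h x ∧ l.next x hx = u := by
    intro u hu
    obtain ⟨x, -, rfl⟩ := Finset.mem_image.1 hu
    exact ⟨x, _, ((hT x).1 x.2).2, rfl⟩
  have hhS : h ∉ S := by
    intro hm
    obtain ⟨x, hx, -, rfl⟩ := hSmem h hm
    exact hh (List.next_mem _ _ hx)
  have hadj_h : ∀ u ∈ S, ¬ G.Adj u h := by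
    intro u hu hadj
    obtain ⟨x, hx, hax, rfl⟩ := hSmem u hu
    exact hl.not_isAttached_next hmax hx hax ⟨h, .nil, by simpa using hh, hadj⟩
  obtain ⟨s, hs, hsk⟩ := Finset.exists_subset_card_eq (s := insert h S) (n := k + 1)
    (by rw [Finset.card_insert_of_notMem hhS]; omega)
  refine ⟨s, hsk, fun u hu v hv hadj => ?_⟩
  rcases Finset.mem_insert.1 (hs hu) with rfl | hu'
  · rcases Finset.mem_insert.1 (hs hv) with rfl | hv'
    · exact G.loopless.irrefl _ hadj
    · exact hadj_h v hv' hadj.symm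
  · rcases Finset.mem_insert.1 (hs hv) with rfl | hv'
    · exact hadj_h u hu' hadj
    · obtain ⟨x, hx, hax, rfl⟩ := hSmem u hu'
      obtain ⟨y, hy, hay, rfl⟩ := hSmem v hv'
      exact hl.not_adj_next_next hmax hx hy hax hay hadj

end ChvatalErdos

section Bipartite

variable {V : Type*} [Fintype V] [DecidableEq V] {G : SimpleGraph V}

/-- A balanced bipartite graph that is complete up to a perfect matching, with parts of size at
least three, is Hamiltonian. -/
lemma isHamiltonian_of_adj_of_ne {k : ℕ} (hk : 2 ≤ k) (hcard : Fintype.card V = 2 * (k + 1))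
    (a b : Fin (k + 1) → V) (ha : a.Injective) (hb : b.Injective) (hab : ∀ i j, a i ≠ b j)
    (hadj : ∀ i j, i ≠ j → G.Adj (a i) (b j)) : G.IsHamiltonian := by
  set σ : ℕ → ℕ := fun i => if i + 2 < k + 1 then i + 2 else i + 2 - (k + 1) with hσ
  set f : ℕ → V := fun m => if m % 2 = 0 then a (Fin.ofNat (k + 1) (m / 2))
    else b (Fin.ofNat (k + 1) (σ (m / 2))) with hf
  have hof : ∀ i j, i < k + 1 → j < k + 1 → Fin.ofNat (k + 1) i = Fin.ofNat (k + 1) j → i = j := by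
    intro i j hi hj hij
    simpa [Fin.ext_iff, Nat.mod_eq_of_lt hi, Nat.mod_eq_of_lt hj] using hij
  have hadj' : ∀ i j, i < k + 1 → j < k + 1 → i ≠ j →
      G.Adj (a (Fin.ofNat (k + 1) i)) (b (Fin.ofNat (k + 1) j)) :=
    fun i j hi hj hij => hadj _ _ fun h => hij (hof i j hi hj h)
  have hcyc : IsCyclicList G ((List.range (2 * (k + 1))).map f) := by
    refine ⟨List.Nodup.map_on ?_ List.nodup_range, ?_, ?_⟩
    · intro x hx y hy hxy
      rw [List.mem_range] at hx hy
      by_cases hx2 : x % 2 = 0 <;> by_cases hy2 : y % 2 = 0 <;>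
        simp only [hf, hx2, hy2, if_true, if_false] at hxy
      · have := hof _ _ (by omega) (by omega) (ha hxy)
        omega
      · exact absurd hxy (hab _ _)
      · exact absurd hxy.symm (hab _ _)
      · have := hof _ _ (by grind) (by grind) (hb hxy)
        grind
    · rw [List.isChain_map, List.isChain_range]
      intro m hm
      by_cases hm2 : m % 2 = 0
      · have h2 : (m + 1) % 2 ≠ 0 := by omega
        simp only [hf, Nat.succ_eq_add_one, hm2, h2, if_true, if_false]
        exact hadj' _ _ (by omega) (by grind) (by grind)
      · have h2 : (m + 1) % 2 = 0 := by omega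
        simp only [hf, Nat.succ_eq_add_one, hm2, h2, if_true, if_false]
        exact (hadj' _ _ (by omega) (by grind) (by grind)).symm
    · have h2 : (2 * (k + 1) - 1) % 2 ≠ 0 := by omega
      intro x hx y hy
      have hx' : x = f (2 * (k + 1) - 1) := by
        rw [List.getLast?_map, List.getLast?_range] at hx
        simpa [eq_comm] using hx
      have hy' : y = f 0 := by
        rw [List.head?_map, List.head?_range] at hy
        simpa [eq_comm] using hy
      subst hx' hy'
      simp only [hf, h2, Nat.zero_mod, if_true, if_false]
      exact (hadj' _ _ (by omega) (by grind) (by grind)).symm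
  exact hcyc.isHamiltonian (by simp [hcard]) (by simp; omega)

variable [DecidableRel G.Adj]

lemma neighborFinset_subset_compl {I : Finset V} (hI : ∀ u ∈ I, ∀ v ∈ I, ¬ G.Adj u v) {u : V}
    (hu : u ∈ I) : G.neighborFinset u ⊆ Iᶜ := by
  intro v hv
  rw [SimpleGraph.mem_neighborFinset] at hv
  rw [mem_compl]
  exact fun hvI => hI u hu v hvI hv

lemma isHamiltonian_of_regular_of_indep {k d : ℕ} (hk : 2 ≤ k) {I : Finset V}
    (hcard : Fintype.card V = 2 * (k + 1)) (hIcard : I.card = k + 1)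
    (hI : ∀ u ∈ I, ∀ v ∈ I, ¬ G.Adj u v) (hJ : ∀ u ∈ Iᶜ, ∀ v ∈ Iᶜ, ¬ G.Adj u v)
    (hreg : G.IsRegularOfDegree d) (hd : k ≤ d) : G.IsHamiltonian := by
  have hJcard : Iᶜ.card = k + 1 := by rw [card_compl]; omega
  have hsubI : ∀ u ∈ Iᶜ, G.neighborFinset u ⊆ I := fun u hu => by
    simpa using neighborFinset_subset_compl hJ hu
  obtain ⟨φ, hφinj, hφ⟩ : ∃ φ : I → V, φ.Injective ∧ ∀ i : I, φ i ∈ Iᶜ ∧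
      ∀ j ∈ Iᶜ, j ≠ φ i → G.Adj i j := by
    rcases hd.lt_or_eq with hlt | rfl
    · have e : I ≃ (Iᶜ : Finset V) := Finset.equivOfCardEq (hIcard.trans hJcard.symm)
      refine ⟨fun i => e i, fun i j hij => e.injective (Subtype.ext hij), fun i => ⟨(e i).2, ?_⟩⟩
      intro j hj _
      have heq := Finset.eq_of_subset_of_card_le (neighborFinset_subset_compl hI i.2) (by
        rw [G.card_neighborFinset_eq_degree, hreg]; omega)
      rwa [← heq, SimpleGraph.mem_neighborFinset] at hj
    · have hone : ∀ i : I, ∃ w, Iᶜ \ G.neighborFinset i = {w} := by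
        intro i
        rw [← Finset.card_eq_one, Finset.card_sdiff_of_subset (neighborFinset_subset_compl hI i.2),
          G.card_neighborFinset_eq_degree, hreg]
        omega
      choose φ hφ using hone
      have hmem : ∀ i : I, φ i ∈ Iᶜ ∧ ¬ G.Adj i (φ i) := by
        intro i
        have : φ i ∈ Iᶜ \ G.neighborFinset i := by rw [hφ i]; simp
        simpa using this
      refine ⟨φ, fun i j hij => ?_, fun i => ⟨(hmem i).1, fun j hj hne => ?_⟩⟩
      · have h1 : (I \ G.neighborFinset (φ i)).card ≤ 1 := by
          rw [Finset.card_sdiff_of_subset (hsubI _ (hmem i).1),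
            G.card_neighborFinset_eq_degree, hreg]
          omega
        refine Subtype.ext (Finset.card_le_one.1 h1 i ?_ j ?_)
        · simpa [SimpleGraph.adj_comm] using (hmem i).2
        · rw [hij]
          simpa [SimpleGraph.adj_comm] using (hmem j).2
      · by_contra hadj
        have : j ∈ Iᶜ \ G.neighborFinset i := by simpa [hadj] using hj
        rw [hφ i, mem_singleton] at this
        exact hne this
  have e : Fin (k + 1) ≃ I := (Finset.equivFinOfCardEq hIcard).symm
  refine isHamiltonian_of_adj_of_ne hk hcard (fun i => e i) (fun i => φ (e i))
    (Subtype.val_injective.comp e.injective) (hφinj.comp e.injective) ?_ ?_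
  · intro i j hij
    exact mem_compl.1 (hφ (e j)).1 (hij ▸ (e i).2)
  · intro i j hij
    exact (hφ (e i)).2 _ (hφ (e j)).1 fun h => hij (e.injective (hφinj h)).symm

lemma sum_degree_eq_of_indep {I : Finset V} (hI : ∀ u ∈ I, ∀ v ∈ I, ¬ G.Adj u v) :
    ∑ v ∈ I, G.degree v = ∑ w ∈ Iᶜ, (I ∩ G.neighborFinset w).card := by
  have := Finset.sum_card_bipartiteAbove_eq_sum_card_bipartiteBelow (s := I) (t := Iᶜ) G.Adj
  convert this using 2 with v hv w hw
  · rw [← G.card_neighborFinset_eq_degree]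
    congr 1
    ext w
    have := @neighborFinset_subset_compl _ _ _ _ _ _ hI _ hv w
    simp only [SimpleGraph.mem_neighborFinset, mem_bipartiteAbove] at this ⊢
    tauto
  · congr 1
    ext v
    simp [SimpleGraph.adj_comm]

lemma sum_degree_le_sum_degree_compl {I : Finset V} (hI : ∀ u ∈ I, ∀ v ∈ I, ¬ G.Adj u v) :
    ∑ v ∈ I, G.degree v ≤ ∑ w ∈ Iᶜ, G.degree w := by
  rw [sum_degree_eq_of_indep hI]
  exact Finset.sum_le_sum fun w _ => card_le_card inter_subset_right

lemma indep_compl_of_sum_degree_eq {I : Finset V} (hI : ∀ u ∈ I, ∀ v ∈ I, ¬ G.Adj u v)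
    (h : ∑ v ∈ I, G.degree v = ∑ w ∈ Iᶜ, G.degree w) :
    ∀ u ∈ Iᶜ, ∀ v ∈ Iᶜ, ¬ G.Adj u v := by
  intro u hu v hv hadj
  have hle : ∀ w ∈ Iᶜ, #(I ∩ G.neighborFinset w) ≤ G.degree w :=
    fun w _ => card_le_card inter_subset_right
  rw [sum_degree_eq_of_indep hI, Finset.sum_eq_sum_iff_of_le hle] at h
  have hN := Finset.eq_of_subset_of_card_le inter_subset_right (h u hu).ge
  have : v ∈ I ∩ G.neighborFinset u := by rw [hN]; simpa using hadj
  exact mem_compl.1 hv (mem_inter.1 this).1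

end Bipartite

/-- If `G` is a `k`-connected (`k ≥ 2`) graph with `n ≥ 3` vertices, `e` edges, and minimum
degree `δ`, and `F(G) ≤ (n − k − 1)δ³ + δ(2(k+1)²δ² − e²)/(k+1)`, then `G` is Hamiltonian. -/
theorem stmt7 {V : Type*} [Fintype V] [DecidableEq V] (G : SimpleGraph V) [DecidableRel G.Adj]
    (k : ℕ) (hk : 2 ≤ k) (hconn : IsKConnected G k) (hn : 3 ≤ Fintype.card V)
    (h : forgottenIndex G ≤ ((Fintype.card V : ℝ) - k - 1) * (G.minDegree : ℝ) ^ 3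
        + (G.minDegree : ℝ) * (2 * ((k : ℝ) + 1) ^ 2 * (G.minDegree : ℝ) ^ 2
            - (G.edgeFinset.card : ℝ) ^ 2) / ((k : ℝ) + 1)) :
    G.IsHamiltonian := by
  by_contra hham
  obtain ⟨I, hIcard, hI⟩ := hconn.exists_indep_of_not_isHamiltonian (by omega) hn hham
  have : Nonempty V := Fintype.card_pos_iff.1 (by omega)
  have hδk : k ≤ G.minDegree := by
    obtain ⟨v, hv⟩ := G.exists_minimal_degree_vertex
    exact hv ▸ hconn.le_degree v
  have hIδ : (k + 1) * G.minDegree ≤ ∑ v ∈ I, G.degree v := by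
    rw [← hIcard, ← smul_eq_mul]
    exact Finset.card_nsmul_le_sum _ _ _ fun v _ => G.minDegree_le_degree v
  have hle := sum_degree_le_sum_degree_compl hI
  have hsum : ∑ v ∈ I, G.degree v + ∑ w ∈ Iᶜ, G.degree w = 2 * #G.edgeFinset := by
    rw [Finset.sum_add_sum_compl, G.sum_degrees_eq_twice_card_edges]
  have hF : (Fintype.card V : ℝ) * (G.minDegree : ℝ) ^ 3 ≤ forgottenIndex G := by
    rw [← nsmul_eq_mul, ← Finset.card_univ]
    refine Finset.card_nsmul_le_sum _ _ _ fun v _ => ?_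
    gcongr
    exact G.minDegree_le_degree v
  have hδpos : (0 : ℝ) < G.minDegree := by
    exact_mod_cast (show 0 < G.minDegree by omega)
  have hk1 : (0 : ℝ) < (k : ℝ) + 1 := by positivity
  have hele : #G.edgeFinset ≤ (k + 1) * G.minDegree := by
    have h1 : ((k : ℝ) + 1) * (G.minDegree : ℝ) ^ 3 ≤
        (G.minDegree : ℝ) * (2 * ((k : ℝ) + 1) ^ 2 * (G.minDegree : ℝ) ^ 2
          - (#G.edgeFinset : ℝ) ^ 2) / ((k : ℝ) + 1) := by linarith
    rw [le_div_iff₀ hk1] at h1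
    have h2 : (#G.edgeFinset : ℝ) ^ 2 ≤ (((k : ℝ) + 1) * G.minDegree) ^ 2 :=
      le_of_mul_le_mul_left (by linarith) hδpos
    have h3 := (sq_le_sq₀ (by positivity) (by positivity)).1 h2
    exact_mod_cast h3
  have he : #G.edgeFinset = (k + 1) * G.minDegree := by omega
  have hreg : G.IsRegularOfDegree G.minDegree := by
    have hsumle : forgottenIndex G ≤ ∑ _v : V, (G.minDegree : ℝ) ^ 3 := by
      rw [Finset.sum_const, Finset.card_univ, nsmul_eq_mul]
      refine h.trans_eq ?_
      rw [he]
      push_cast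
      field_simp
      ring
    have hge : ∀ v ∈ univ, (G.minDegree : ℝ) ^ 3 ≤ (G.degree v : ℝ) ^ 3 := fun v _ => by
      gcongr
      exact G.minDegree_le_degree v
    have heq := (Finset.sum_eq_sum_iff_of_le hge).1 (le_antisymm (Finset.sum_le_sum hge) hsumle)
    intro v
    have := (pow_left_inj₀ hδpos.le (Nat.cast_nonneg _) three_ne_zero).1 (heq v (mem_univ v))
    exact_mod_cast this.symm
  have hcard : Fintype.card V = 2 * (k + 1) := by
    have h1 := G.sum_degrees_eq_twice_card_edges
    simp only [hreg.degree_eq, Finset.sum_const, Finset.card_univ, smul_eq_mul, he] at h1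
    rw [← mul_assoc] at h1
    exact Nat.eq_of_mul_eq_mul_right (by omega) h1
  exact hham (isHamiltonian_of_regular_of_indep hk hcard hIcard hI
    (indep_compl_of_sum_degree_eq hI (by omega)) hreg hδk)
end
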